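/- In characteristic zero, let k ⊆ K be a field extension and z ∈ K. Then z is algebraic over k if and only if the image dz of z in the K-vector space of Kähler differentials Ω_{K/k} is zero (assuming K is finitely generated over k). -/

import Mathlib

/-- In characteristic zero, for a finitely generated field extension `k ⊆ K` and
`z ∈ K`, the element `z` is algebraic over `k` iff its differential `dz`
vanishes in the `K`-vector space of Kähler differentials `Ω[K⁄k]`. -/
theorem isAlgebraic_iff_kaehler_d_eq_zero
    (k K : Type*) [Field k] [Field K] [Algebra k K] [CharZero k]
    (hfg : ∃ s : Finset K, IntermediateField.adjoin k (s : Set K) = ⊤)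
    (z : K) :
    IsAlgebraic k z ↔ KaehlerDifferential.D k K z = 0 := by
  constructor
  · intro h
    have hi := h.isIntegral
    have hs : (minpoly k z).Separable := (minpoly.irreducible hi).separable
    have h1 := (KaehlerDifferential.D k K).map_aeval (minpoly k z) z
    rw [minpoly.aeval, map_zero] at h1
    exact (smul_eq_zero.mp h1.symm).resolve_left
      (hs.aeval_derivative_ne_zero (minpoly.aeval k z))
  · intro h
    by_contra hz
    have hinj : Function.Injective (Polynomial.aeval (R := k) z) :=
      transcendental_iff_injective.mp hz
    letI : Algebra (Polynomial k) K := (Polynomial.aeval (R := k) z).toAlgebra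
    haveI : IsScalarTower k (Polynomial k) K :=
      .of_algebraMap_eq' (Polynomial.aeval (R := k) z).comp_algebraMap.symm
    haveI : FaithfulSMul (Polynomial k) K := (faithfulSMul_iff_algebraMap_injective _ _).mpr hinj
    letI := FractionRing.liftAlgebra (Polynomial k) K
    haveI : IsScalarTower k (FractionRing (Polynomial k)) K :=
      .to₁₃₄ k (Polynomial k) _ K
    haveI : CharZero (FractionRing (Polynomial k)) :=
      charZero_of_injective_algebraMap (algebraMap k _).injective
    haveI : Algebra.EssFiniteType k K := by
      rw [← IntermediateField.fg_top_iff]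
      exact hfg
    haveI : Algebra.EssFiniteType (FractionRing (Polynomial k)) K := .of_comp k _ K
    haveI : Algebra.FormallySmooth (Polynomial k) (FractionRing (Polynomial k)) :=
      .of_isLocalization (nonZeroDivisors _)
    haveI : Algebra.FormallySmooth (Polynomial k) K := .comp _ (FractionRing (Polynomial k)) _
    have hex := Algebra.H1Cotangent.exact_δ_mapBaseChange k (Polynomial k) K
    have h0 : (1 : K) ⊗ₜ[Polynomial k] KaehlerDifferential.D k (Polynomial k) Polynomial.X = 0 := by
      have : KaehlerDifferential.mapBaseChange k (Polynomial k) K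
          ((1 : K) ⊗ₜ[Polynomial k] KaehlerDifferential.D k (Polynomial k) Polynomial.X) = 0 := by
        rw [KaehlerDifferential.mapBaseChange_tmul, KaehlerDifferential.map_D, one_smul]
        have : algebraMap (Polynomial k) K Polynomial.X = z := Polynomial.aeval_X z
        rw [this, h]
      obtain ⟨y, hy⟩ := (hex _).mp this
      rw [← hy, Subsingleton.elim y 0, map_zero]
    have h1 := congrArg (TensorProduct.rid (Polynomial k) K ∘
      (KaehlerDifferential.polynomialEquiv k).toLinearMap.lTensor K) h0
    simp at h1
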